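/- The output of the T-Greedy algorithm equals the output of the S-Greedy algorithm, i.e., M_T = M_S; consequently T-Greedy is also a 2-approximation algorithm for the unweighted d-distance matching problem: 2|M_T| ≥ |M*| for every d-distance matching M*. -/

import Mathlib

open Finset

/-- `M` is a `d`-distance matching of the bipartite graph with left node set `Fin n`
(ordered) and right node set `Fin k` (indexed), whose edge set is `E`. -/
def DDM {n k : ℕ} (d : ℕ) (E M : Finset (Fin n × Fin k)) : Prop :=
  M ⊆ E ∧ (∀ e ∈ M, ∀ f ∈ M, e.1 = f.1 → e = f) ∧
    (∀ e ∈ M, ∀ f ∈ M, e.2 = f.2 → e ≠ f → d ≤ Nat.dist e.1.val f.1.val)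

open Classical in
/-- The `S`-greedy algorithm: scan the nodes of `S` in order; at node `s`, if some edge
`s t` can be added keeping feasibility, add the one with the smallest index of `t`. -/
noncomputable def sGreedy {n k : ℕ} (d : ℕ) (E : Finset (Fin n × Fin k)) :
    List (Fin n) → Finset (Fin n × Fin k) → Finset (Fin n × Fin k)
  | [], M => M
  | s :: rest, M =>
      sGreedy d E rest
        (if h : (Finset.univ.filter
            (fun t : Fin k => (s, t) ∈ E ∧ DDM d E (insert (s, t) M))).Nonempty
         then insert (s, (Finset.univ.filter
            (fun t : Fin k => (s, t) ∈ E ∧ DDM d E (insert (s, t) M))).min' h) M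
         else M)

/-- One row of the `T`-greedy algorithm for the node `t_j`: scan `i = 0, 1, …`; whenever
`s_i t_j ∈ E` and `s_i` is not yet covered (by `C`), add `s_i t_j` and continue from
`i + d`, otherwise continue from `i + 1`. (`fuel` bounds the number of steps; starting
with `fuel = n` this performs the whole scan whenever `d ≥ 1`.) -/
def tGreedyRow {n k : ℕ} (d : ℕ) (E : Finset (Fin n × Fin k)) (j : Fin k)
    (C : Finset (Fin n)) : ℕ → ℕ → Finset (Fin n × Fin k)
  | 0, _ => ∅
  | fuel + 1, i =>
      if h : i < n then
        if (⟨i, h⟩, j) ∈ E ∧ ⟨i, h⟩ ∉ C then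
          insert (⟨i, h⟩, j) (tGreedyRow d E j C fuel (i + d))
        else tGreedyRow d E j C fuel (i + 1)
      else ∅

/-- The `T`-greedy algorithm: process the nodes `t_j` of `T` in order of their indices,
running a row scan for each while maintaining the set `C` of covered `S`-nodes. -/
def tGreedyAux {n k : ℕ} (d : ℕ) (E : Finset (Fin n × Fin k)) :
    List (Fin k) → Finset (Fin n × Fin k) → Finset (Fin n) → Finset (Fin n × Fin k)
  | [], M, _ => M
  | j :: rest, M, C =>
      tGreedyAux d E rest (M ∪ tGreedyRow d E j C n 0)
        (C ∪ (tGreedyRow d E j C n 0).image Prod.fst)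

/-- The output of the `T`-greedy algorithm. -/
def tGreedy {n k : ℕ} (d : ℕ) (E : Finset (Fin n × Fin k)) : Finset (Fin n × Fin k) :=
  tGreedyAux d E (List.finRange k) ∅ ∅

/-!
Orient the conflicts between edges: `s t` blocks `s t'` for `t < t'`, and `s t` blocks `s' t` when
`s` precedes `s'` at distance less than `d`. The `d`-distance matchings are the independent sets of
this conflict relation, which is well-founded and so has exactly one kernel (an independent set
blocking every edge outside it). A greedy algorithm that never treats an edge before one blocking
it computes that kernel, and both scanning orders have this property. Finally, an edge `s t` of the
kernel can account for at most two edges of a `d`-distance matching: one at `s`, and one at `t`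
whose other end follows `s` at distance less than `d`.
-/

section Kernel

variable {α : Type*} {r : α → α → Prop} {E M N : Set α}

/-- `M` is a kernel of the digraph induced by `r` on the vertex set `E`, where `r f e` is an arc
from `f` to `e`: a vertex of `E` belongs to `M` exactly when it receives no arc from `M`. -/
def IsKernelOn (r : α → α → Prop) (E M : Set α) : Prop :=
  ∀ e, e ∈ M ↔ e ∈ E ∧ ∀ f ∈ M, ¬ r f e

theorem IsKernelOn.subset (hM : IsKernelOn r E M) : M ⊆ E :=
  fun e he => ((hM e).1 he).1

theorem IsKernelOn.not_rel (hM : IsKernelOn r E M) {e f : α} (he : e ∈ M) (hf : f ∈ M) :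
    ¬ r f e :=
  ((hM e).1 he).2 f hf

theorem IsKernelOn.exists_eq_or_rel (hM : IsKernelOn r E M) {e : α} (he : e ∈ E) :
    ∃ f ∈ M, f = e ∨ r f e := by
  by_cases heM : e ∈ M
  · exact ⟨e, heM, Or.inl rfl⟩
  · have hblocked : ¬ ∀ f ∈ M, ¬ r f e := fun h => heM ((hM e).2 ⟨he, h⟩)
    push Not at hblocked
    obtain ⟨f, hf, hfe⟩ := hblocked
    exact ⟨f, hf, Or.inr hfe⟩

theorem IsKernelOn.unique (hr : WellFounded r) (hM : IsKernelOn r E M) (hN : IsKernelOn r E N) :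
    M = N := by
  ext e
  induction e using hr.induction with
  | _ e ih =>
    rw [hM e, hN e]
    refine and_congr_right fun _ => forall_congr' fun f => ?_
    exact ⟨fun h hf hfe => h ((ih f hfe).2 hf) hfe, fun h hf hfe => h ((ih f hfe).1 hf) hfe⟩

theorem isKernelOn_empty (r : α → α → Prop) : IsKernelOn r ∅ ∅ := by
  simp [IsKernelOn]

theorem IsKernelOn.union {E₁ E₂ M₁ M₂ : Set α} (h₁ : IsKernelOn r E₁ M₁)
    (h₂ : IsKernelOn r {e ∈ E₂ | ∀ f ∈ M₁, ¬ r f e} M₂) (hr : ∀ e ∈ E₁, ∀ f ∈ E₂, ¬ r f e) :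
    IsKernelOn r (E₁ ∪ E₂) (M₁ ∪ M₂) := by
  intro e
  constructor
  · rintro (he | he)
    · refine ⟨Or.inl (h₁.subset he), ?_⟩
      rintro f (hf | hf)
      · exact h₁.not_rel he hf
      · exact hr e (h₁.subset he) f (h₂.subset hf).1
    · refine ⟨Or.inr (h₂.subset he).1, ?_⟩
      rintro f (hf | hf)
      · exact (h₂.subset he).2 f hf
      · exact h₂.not_rel he hf
  · rintro ⟨he | he, hfree⟩
    · exact Or.inl ((h₁ e).2 ⟨he, fun f hf => hfree f (Or.inl hf)⟩)
    · exact Or.inr ((h₂ e).2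
        ⟨⟨he, fun f hf => hfree f (Or.inl hf)⟩, fun f hf => hfree f (Or.inr hf)⟩)

theorem IsKernelOn.insert_source {e : α} (he : e ∈ E) (hsource : ∀ f ∈ E, ¬ r f e)
    (hM : IsKernelOn r {f ∈ E | f ≠ e ∧ ¬ r e f} M) : IsKernelOn r E (insert e M) := by
  have hsingleton : IsKernelOn r {e} {e} := by
    intro f
    simp only [Set.mem_singleton_iff, forall_eq, iff_self_and]
    rintro rfl
    exact hsource f he
  have hE : E = {e} ∪ (E \ {e}) := by simp [he]
  have hrest : {f ∈ E | f ≠ e ∧ ¬ r e f} = {f ∈ E \ {e} | ∀ g ∈ ({e} : Set α), ¬ r g f} := by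
    ext f
    simp [and_assoc]
  rw [hE, Set.insert_eq]
  refine hsingleton.union (hrest ▸ hM) ?_
  rintro _ rfl f hf
  exact hsource f hf.1

end Kernel

section Greedy

variable {n k d : ℕ} {E M : Finset (Fin n × Fin k)}

/-- The conflict relation of `d`-distance matchings, oriented from the edge with the smaller
differing endpoint to the one with the larger. -/
def Blocks (d : ℕ) (e f : Fin n × Fin k) : Prop :=
  (e.1 = f.1 ∧ e.2 < f.2) ∨ (e.2 = f.2 ∧ e.1 < f.1 ∧ f.1.val < e.1.val + d)

theorem Blocks.lt {e f : Fin n × Fin k} (h : Blocks d e f) : e < f := by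
  rcases h with ⟨hs, ht⟩ | ⟨ht, hs, -⟩
  · exact Prod.lt_iff.2 (Or.inr ⟨hs.le, ht⟩)
  · exact Prod.lt_iff.2 (Or.inl ⟨hs, ht.le⟩)

theorem wellFounded_blocks (d : ℕ) : WellFounded (Blocks (n := n) (k := k) d) :=
  Subrelation.wf Blocks.lt wellFounded_lt

theorem blocks_iff_of_snd_lt {e f : Fin n × Fin k} (h : e.2 < f.2) :
    Blocks d e f ↔ e.1 = f.1 := by
  simp [Blocks, h, h.ne]

theorem blocks_iff_of_snd_eq {e f : Fin n × Fin k} (h : e.2 = f.2) :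
    Blocks d e f ↔ e.1 < f.1 ∧ f.1.val < e.1.val + d := by
  simp [Blocks, h]

theorem ddm_iff_forall_not_blocks :
    DDM d E M ↔ M ⊆ E ∧ ∀ e ∈ M, ∀ f ∈ M, ¬ Blocks d e f := by
  refine and_congr_right fun _ => ⟨?_, fun h => ⟨?_, ?_⟩⟩
  · rintro ⟨hS, hT⟩ e he f hf (⟨hs, ht⟩ | ⟨ht, hs, hd⟩)
    · exact ht.ne (congrArg Prod.snd (hS e he f hf hs))
    · have hdist := hT e he f hf ht fun hef => hs.ne (congrArg Prod.fst hef)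
      rw [Nat.dist_eq_sub_of_le hs.le] at hdist
      omega
  · intro e he f hf hs
    refine Prod.ext hs (le_antisymm ?_ ?_)
    · exact not_lt.1 fun ht => h f hf e he (Or.inl ⟨hs.symm, ht⟩)
    · exact not_lt.1 fun ht => h e he f hf (Or.inl ⟨hs, ht⟩)
  · intro e he f hf ht hne
    rcases lt_trichotomy e.1 f.1 with hs | hs | hs
    · have hd : ¬ f.1.val < e.1.val + d := fun hd => h e he f hf (Or.inr ⟨ht, hs, hd⟩)
      rw [Nat.dist_eq_sub_of_le hs.le]
      omega
    · exact absurd (Prod.ext hs ht) hne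
    · have hd : ¬ e.1.val < f.1.val + d := fun hd => h f hf e he (Or.inr ⟨ht.symm, hs, hd⟩)
      rw [Nat.dist_eq_sub_of_le_right hs.le]
      omega

theorem ddm_insert_iff_of_forall_lt (hM : DDM d E M) {s : Fin n} (hs : ∀ f ∈ M, f.1 < s)
    {t : Fin k} (hst : (s, t) ∈ E) :
    DDM d E (insert (s, t) M) ↔ ∀ f ∈ M, ¬ Blocks d f (s, t) := by
  rw [ddm_iff_forall_not_blocks] at hM ⊢
  constructor
  · exact fun h f hf => h.2 f (Finset.mem_insert_of_mem hf) _ (Finset.mem_insert_self _ _)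
  · refine fun h => ⟨Finset.insert_subset hst hM.1, fun e he f hf hef => ?_⟩
    rcases Finset.mem_insert.1 he with rfl | he <;> rcases Finset.mem_insert.1 hf with rfl | hf
    · exact hef.lt.false
    · exact (hs f hf).not_ge hef.lt.le.1
    · exact h e he hef
    · exact hM.2 e he f hf hef

section SGreedy

open Classical in
/-- The nodes of `T` among which `S`-Greedy chooses at `s`, when `M` has been selected so far. -/
noncomputable def sChoices (d : ℕ) (E M : Finset (Fin n × Fin k)) (s : Fin n) : Finset (Fin k) :=
  Finset.univ.filter fun t => (s, t) ∈ E ∧ DDM d E (insert (s, t) M)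

/-- The selection of `S`-Greedy after treating `s`, when `M` has been selected so far. -/
noncomputable def sStep (d : ℕ) (E M : Finset (Fin n × Fin k)) (s : Fin n) :
    Finset (Fin n × Fin k) :=
  if h : (sChoices d E M s).Nonempty then insert (s, (sChoices d E M s).min' h) M else M

theorem sGreedy_cons (s : Fin n) (l : List (Fin n)) :
    sGreedy d E (s :: l) M = sGreedy d E l (sStep d E M s) :=
  rfl

theorem mem_sChoices_iff (hM : DDM d E M) {s : Fin n} (hs : ∀ f ∈ M, f.1 < s) {t : Fin k} :
    t ∈ sChoices d E M s ↔ (s, t) ∈ E ∧ ∀ f ∈ M, ¬ Blocks d f (s, t) := by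
  simp only [sChoices, Finset.mem_filter, Finset.mem_univ, true_and]
  exact and_congr_right fun hst => ddm_insert_iff_of_forall_lt hM hs hst

theorem isKernelOn_singleton_min' (d : ℕ) (s : Fin n) {A : Finset (Fin k)} (hA : A.Nonempty) :
    IsKernelOn (Blocks d) {e | e.1 = s ∧ e.2 ∈ A} {(s, A.min' hA)} := by
  rw [← insert_empty_eq]
  refine IsKernelOn.insert_source ⟨rfl, A.min'_mem hA⟩ ?_ ?_
  · rintro ⟨_, t⟩ ⟨rfl, ht⟩ hblocks
    rcases hblocks with ⟨-, hlt⟩ | ⟨-, hlt, -⟩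
    · exact (A.min'_le t ht).not_gt hlt
    · exact hlt.false
  · convert isKernelOn_empty (Blocks d)
    refine Set.eq_empty_iff_forall_notMem.2 ?_
    rintro ⟨_, t⟩ ⟨⟨rfl, ht⟩, hne, hfree⟩
    have hmin : A.min' hA ≠ t := fun h => hne (by rw [h])
    exact hfree (Or.inl ⟨rfl, (A.min'_le t ht).lt_of_ne hmin⟩)

theorem exists_isKernelOn_coe_sStep (d : ℕ) (E M : Finset (Fin n × Fin k)) (s : Fin n) :
    ∃ N : Set (Fin n × Fin k), IsKernelOn (Blocks d) {e | e.1 = s ∧ e.2 ∈ sChoices d E M s} N ∧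
      (sStep d E M s : Set (Fin n × Fin k)) = ↑M ∪ N := by
  by_cases h : (sChoices d E M s).Nonempty
  · exact ⟨_, isKernelOn_singleton_min' d s h, by simp [sStep, h]⟩
  · refine ⟨∅, ?_, by simp [sStep, h]⟩
    simpa [Finset.not_nonempty_iff_eq_empty.1 h] using isKernelOn_empty (Blocks d)

theorem IsKernelOn.ddm {P : Set (Fin n × Fin k)} (hP : P ⊆ E)
    (hM : IsKernelOn (Blocks d) P (M : Set (Fin n × Fin k))) : DDM d E M :=
  ddm_iff_forall_not_blocks.2
    ⟨Finset.coe_subset.1 (hM.subset.trans hP), fun _ he _ hf => hM.not_rel hf he⟩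

theorem isKernelOn_sStep {P : Set (Fin n)} {s : Fin n} (hs : ∀ p ∈ P, p < s)
    (hM : IsKernelOn (Blocks d) {e | e ∈ E ∧ e.1 ∈ P} M) :
    IsKernelOn (Blocks d) {e | e ∈ E ∧ e.1 ∈ insert s P} (sStep d E M s) := by
  have hDDM : DDM d E M := hM.ddm fun e he => he.1
  have hMs : ∀ f ∈ M, f.1 < s := fun f hf => hs f.1 (hM.subset hf).2
  obtain ⟨N, hN, hstep⟩ := exists_isKernelOn_coe_sStep d E M s
  have hchoices : {e | e.1 = s ∧ e.2 ∈ sChoices d E M s} =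
      {e ∈ {e | e ∈ E ∧ e.1 = s} | ∀ f ∈ (M : Set (Fin n × Fin k)), ¬ Blocks d f e} := by
    ext ⟨s', t⟩
    simp only [Set.mem_ofPred_eq, mem_sChoices_iff hDDM hMs, Finset.mem_coe]
    constructor
    · rintro ⟨rfl, hE, hfree⟩
      exact ⟨⟨hE, rfl⟩, hfree⟩
    · rintro ⟨⟨hE, rfl⟩, hfree⟩
      exact ⟨rfl, hE, hfree⟩
  have hsplit : {e | e ∈ E ∧ e.1 ∈ insert s P} =
      {e | e ∈ E ∧ e.1 ∈ P} ∪ {e | e ∈ E ∧ e.1 = s} := by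
    ext e
    simp only [Set.mem_ofPred_eq, Set.mem_insert_iff, Set.mem_union]
    tauto
  rw [hstep, hsplit]
  refine hM.union (hchoices ▸ hN) fun e he f hf hfe => ?_
  exact (hs e.1 he.2).not_ge (hf.2 ▸ hfe.lt.le.1)

theorem isKernelOn_sGreedy {l : List (Fin n)} {P : Set (Fin n)} (hl : l.Pairwise (· < ·))
    (hP : ∀ p ∈ P, ∀ s ∈ l, p < s) (hM : IsKernelOn (Blocks d) {e | e ∈ E ∧ e.1 ∈ P} M) :
    IsKernelOn (Blocks d) {e | e ∈ E ∧ (e.1 ∈ P ∨ e.1 ∈ l)} (sGreedy d E l M) := by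
  induction l generalizing M P with
  | nil => simpa [sGreedy] using hM
  | cons s l ih =>
    obtain ⟨hsl, hl⟩ := List.pairwise_cons.1 hl
    have hstep := isKernelOn_sStep (fun p hp => hP p hp s List.mem_cons_self) hM
    have hP' : ∀ p ∈ insert s P, ∀ s' ∈ l, p < s' := by
      rintro p (rfl | hp) s' hs'
      · exact hsl s' hs'
      · exact hP p hp s' (List.mem_cons_of_mem s hs')
    rw [sGreedy_cons]
    convert ih hl hP' hstep using 1
    ext e
    simp only [Set.mem_ofPred_eq, Set.mem_insert_iff, List.mem_cons]
    tauto

theorem isKernelOn_sGreedy_finRange (d : ℕ) (E : Finset (Fin n × Fin k)) :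
    IsKernelOn (Blocks d) (E : Set (Fin n × Fin k)) (sGreedy d E (List.finRange n) ∅) := by
  simpa using isKernelOn_sGreedy (d := d) (E := E) (M := ∅) (P := ∅)
    (List.pairwise_lt_finRange n) (by simp) (by simpa using isKernelOn_empty (Blocks d))

end SGreedy

section TGreedy

/-- The edges at `t_j` open to a row scan that has reached position `i`, when the nodes in `C` are
covered. -/
def rowCandidates (E : Finset (Fin n × Fin k)) (j : Fin k) (C : Finset (Fin n)) (i : ℕ) :
    Set (Fin n × Fin k) :=
  {e | e ∈ E ∧ e.2 = j ∧ e.1 ∉ C ∧ i ≤ e.1}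

theorem rowCandidates_eq_empty (E : Finset (Fin n × Fin k)) (j : Fin k) (C : Finset (Fin n))
    {i : ℕ} (hi : n ≤ i) : rowCandidates E j C i = ∅ :=
  Set.eq_empty_iff_forall_notMem.2 fun e he => (e.1.isLt.trans_le hi).not_ge he.2.2.2

theorem rowCandidates_succ {j : Fin k} {C : Finset (Fin n)} {i : ℕ} (hi : i < n)
    (h : ¬ ((⟨i, hi⟩, j) ∈ E ∧ ⟨i, hi⟩ ∉ C)) :
    rowCandidates E j C (i + 1) = rowCandidates E j C i := by
  ext ⟨s, t⟩
  refine and_congr_right fun hE => and_congr_right ?_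
  rintro rfl
  refine and_congr_right fun hC => ?_
  have hne : i ≠ s.val := by
    rintro rfl
    exact h ⟨hE, hC⟩
  exact Nat.succ_le_iff.trans ⟨le_of_lt, fun his => his.lt_of_ne hne⟩

theorem sep_not_blocks_rowCandidates (hd : 1 ≤ d) (E : Finset (Fin n × Fin k)) (j : Fin k)
    (C : Finset (Fin n)) (s : Fin n) :
    {f ∈ rowCandidates E j C s | f ≠ (s, j) ∧ ¬ Blocks d (s, j) f} =
      rowCandidates E j C (s + d) := by
  ext ⟨s', t⟩
  have hskip (ht : t = j) :
      s.val ≤ s' ∧ (s', t) ≠ (s, j) ∧ ¬ Blocks d (s, j) (s', t) ↔ s.val + d ≤ s' := by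
    rw [blocks_iff_of_snd_eq ht.symm]
    simp only [ht, ne_eq, Prod.mk.injEq, and_true, Fin.ext_iff, Fin.lt_def]
    omega
  simp only [rowCandidates, Set.mem_ofPred_eq]
  tauto

theorem isKernelOn_tGreedyRow (hd : 1 ≤ d) (E : Finset (Fin n × Fin k)) (j : Fin k)
    (C : Finset (Fin n)) {fuel i : ℕ} (hfuel : n ≤ i + fuel) :
    IsKernelOn (Blocks d) (rowCandidates E j C i) (tGreedyRow d E j C fuel i) := by
  induction fuel generalizing i with
  | zero =>
    have hi : n ≤ i := hfuel
    simpa [tGreedyRow, rowCandidates_eq_empty E j C hi] using isKernelOn_empty (Blocks d)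
  | succ fuel ih =>
    by_cases hi : i < n
    · by_cases hadd : (⟨i, hi⟩, j) ∈ E ∧ ⟨i, hi⟩ ∉ C
      · rw [tGreedyRow, dif_pos hi, if_pos hadd, Finset.coe_insert]
        refine IsKernelOn.insert_source ⟨hadd.1, rfl, hadd.2, le_rfl⟩ ?_ ?_
        · exact fun f hf hblocks => hf.2.2.2.not_gt ((blocks_iff_of_snd_eq hf.2.1).1 hblocks).1
        · rw [sep_not_blocks_rowCandidates hd E j C ⟨i, hi⟩]
          exact ih (by simp only; omega)
      · rw [tGreedyRow, dif_pos hi, if_neg hadd, ← rowCandidates_succ hi hadd]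
        exact ih (by omega)
    · simpa [tGreedyRow, hi, rowCandidates_eq_empty E j C (not_lt.1 hi)] using
        isKernelOn_empty (Blocks d)

theorem isKernelOn_union_tGreedyRow (hd : 1 ≤ d) {P : Set (Fin k)} {j : Fin k}
    (hj : ∀ p ∈ P, p < j) (hM : IsKernelOn (Blocks d) {e | e ∈ E ∧ e.2 ∈ P} M) :
    IsKernelOn (Blocks d) {e | e ∈ E ∧ e.2 ∈ insert j P}
      (M ∪ tGreedyRow d E j (M.image Prod.fst) n 0 : Finset (Fin n × Fin k)) := by
  have hrow := isKernelOn_tGreedyRow hd E j (M.image Prod.fst) (Nat.zero_add n).ge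
  have hMj : ∀ f ∈ M, f.2 < j := fun f hf => hj f.2 (hM.subset hf).2
  have huncovered : rowCandidates E j (M.image Prod.fst) 0 =
      {e ∈ {e | e ∈ E ∧ e.2 = j} | ∀ f ∈ (M : Set (Fin n × Fin k)), ¬ Blocks d f e} := by
    ext ⟨s, t⟩
    simp only [rowCandidates, Set.mem_ofPred_eq, Nat.zero_le, and_true, Finset.mem_image,
      not_exists, not_and, Finset.mem_coe, and_assoc]
    refine and_congr_right fun _ => and_congr_right ?_
    rintro rfl
    exact forall₂_congr fun f hf => not_congr (blocks_iff_of_snd_lt (f := (s, t)) (hMj f hf)).symm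
  have hsplit : {e | e ∈ E ∧ e.2 ∈ insert j P} =
      {e | e ∈ E ∧ e.2 ∈ P} ∪ {e | e ∈ E ∧ e.2 = j} := by
    ext e
    simp only [Set.mem_ofPred_eq, Set.mem_insert_iff, Set.mem_union]
    tauto
  rw [Finset.coe_union, hsplit]
  refine hM.union (huncovered ▸ hrow) fun e he f hf hfe => ?_
  exact (hj e.2 he.2).not_ge (hf.2 ▸ hfe.lt.le.2)

theorem isKernelOn_tGreedyAux (hd : 1 ≤ d) {l : List (Fin k)} {P : Set (Fin k)}
    (hl : l.Pairwise (· < ·)) (hP : ∀ p ∈ P, ∀ j ∈ l, p < j)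
    (hM : IsKernelOn (Blocks d) {e | e ∈ E ∧ e.2 ∈ P} M) :
    IsKernelOn (Blocks d) {e | e ∈ E ∧ (e.2 ∈ P ∨ e.2 ∈ l)}
      (tGreedyAux d E l M (M.image Prod.fst)) := by
  induction l generalizing M P with
  | nil => simpa [tGreedyAux] using hM
  | cons j l ih =>
    obtain ⟨hjl, hl⟩ := List.pairwise_cons.1 hl
    have hrow := isKernelOn_union_tGreedyRow hd (fun p hp => hP p hp j List.mem_cons_self) hM
    have hP' : ∀ p ∈ insert j P, ∀ j' ∈ l, p < j' := by
      rintro p (rfl | hp) j' hj'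
      · exact hjl j' hj'
      · exact hP p hp j' (List.mem_cons_of_mem j hj')
    rw [tGreedyAux, ← Finset.image_union]
    convert ih hl hP' hrow using 1
    ext e
    simp only [Set.mem_ofPred_eq, Set.mem_insert_iff, List.mem_cons]
    tauto

theorem isKernelOn_tGreedy (hd : 1 ≤ d) (E : Finset (Fin n × Fin k)) :
    IsKernelOn (Blocks d) (E : Set (Fin n × Fin k)) (tGreedy d E) := by
  simpa [tGreedy] using isKernelOn_tGreedyAux (E := E) (M := ∅) (P := ∅) hd
    (List.pairwise_lt_finRange k) (by simp) (by simpa using isKernelOn_empty (Blocks d))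

end TGreedy

section Approximation

theorem DDM.card_filter_fst_eq_le_one (hM : DDM d E M) (s : Fin n) : #{e ∈ M | e.1 = s} ≤ 1 := by
  refine Finset.card_le_one.2 fun e he f hf => ?_
  rw [Finset.mem_filter] at he hf
  exact hM.2.1 e he.1 f hf.1 (he.2.trans hf.2.symm)

theorem DDM.card_filter_snd_eq_window_le_one (hM : DDM d E M) (s : Fin n) (t : Fin k) :
    #{e ∈ M | e.2 = t ∧ s < e.1 ∧ e.1.val < s.val + d} ≤ 1 := by
  refine Finset.card_le_one.2 fun e he f hf => by_contra fun hne => ?_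
  rw [Finset.mem_filter] at he hf
  obtain ⟨heM, het, hse, hes⟩ := he
  obtain ⟨hfM, hft, hsf, hfs⟩ := hf
  have hdist := hM.2.2 e heM f hfM (het.trans hft.symm) hne
  simp only [Nat.dist] at hdist
  omega

theorem IsKernelOn.card_le_two_mul_card {N : Finset (Fin n × Fin k)}
    (hM : IsKernelOn (Blocks d) (E : Set (Fin n × Fin k)) M) (hN : DDM d E N) :
    #N ≤ 2 * #M := by
  let dominated (f : Fin n × Fin k) : Finset (Fin n × Fin k) :=
    {e ∈ N | e.1 = f.1} ∪ {e ∈ N | e.2 = f.2 ∧ f.1 < e.1 ∧ e.1.val < f.1.val + d}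
  have hcover : N ⊆ M.biUnion dominated := by
    intro e he
    obtain ⟨f, hf, hfe⟩ := hM.exists_eq_or_rel (hN.1 he)
    refine Finset.mem_biUnion.2 ⟨f, hf, ?_⟩
    simp only [dominated, Finset.mem_union, Finset.mem_filter]
    rcases hfe with rfl | ⟨hs, -⟩ | ⟨ht, hwindow⟩
    · exact Or.inl ⟨he, rfl⟩
    · exact Or.inl ⟨he, hs.symm⟩
    · exact Or.inr ⟨he, ht.symm, hwindow⟩
  have hdominated (f : Fin n × Fin k) : #(dominated f) ≤ 2 :=
    (Finset.card_union_le _ _).trans <| add_le_add (hN.card_filter_fst_eq_le_one f.1)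
      (hN.card_filter_snd_eq_window_le_one f.1 f.2)
  calc #N ≤ #(M.biUnion dominated) := Finset.card_le_card hcover
    _ ≤ #M * 2 := Finset.card_biUnion_le_card_mul M dominated 2 fun f _ => hdominated f
    _ = 2 * #M := mul_comm _ _

end Approximation

end Greedy

/-- The outputs of `T`-Greedy and `S`-Greedy coincide; consequently `T`-Greedy is a
2-approximation algorithm for the unweighted `d`-distance matching problem. -/
theorem stmt13 {n k : ℕ} (d : ℕ) (hd : 1 ≤ d) (E : Finset (Fin n × Fin k)) :
    tGreedy d E = sGreedy d E (List.finRange n) ∅ ∧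
    ∀ Ms, DDM d E Ms → Ms.card ≤ 2 * (tGreedy d E).card := by
  have hT := isKernelOn_tGreedy hd E
  have hS := isKernelOn_sGreedy_finRange d E
  exact ⟨Finset.coe_injective (hT.unique (wellFounded_blocks d) hS),
    fun _ hMs => hT.card_le_two_mul_card hMs⟩
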